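/- (Divergence of ergodic coefficients under logarithmic cooling) Let Γ = Σ_{x∈V} ( q_x + |h_x| + Σ_{y∈V} |J_{x,y}| ) and let β_t = (log t)/Γ for t ≥ 1. Then Σ_{t=1}^∞ (1 − δ(P^SCA_{β_t,q})) = ∞, where δ(P) = max_{σ,τ∈Ω} ||P(σ,·) − P(τ,·)||_TV is Dobrushin's ergodic coefficient. -/

import Mathlib

open Real Finset

/-- Spin configurations: `Ω = {-1,+1}^V`. -/
abbrev Conf (V : Type*) := V → ({-1, 1} : Finset ℝ)

instance {V : Type*} : Nonempty (Conf V) := ⟨fun _ => ⟨1, by simp⟩⟩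

/-- Flip a single spin value. -/
noncomputable def spinFlip (s : ({-1, 1} : Finset ℝ)) : ({-1, 1} : Finset ℝ) :=
  ⟨-(s : ℝ), by
    have hs := s.2
    simp only [Finset.mem_insert, Finset.mem_singleton] at hs ⊢
    rcases hs with h | h <;> simp [h]⟩

/-- `σ^x`: the configuration `σ` with the spin at `x` flipped. -/
noncomputable def confFlip {V : Type*} [DecidableEq V] (σ : Conf V) (x : V) : Conf V :=
  Function.update σ x (spinFlip (σ x))

/-- `D_{σ,τ}`: the set of vertices at which `σ` and `τ` disagree. -/
noncomputable def Dset {V : Type*} [Fintype V] (σ τ : Conf V) : Finset V :=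
  Finset.univ.filter fun x => (σ x : ℝ) ≠ (τ x : ℝ)

/-- The cavity field `h̃_x(σ) = Σ_y J_{x,y} σ_y + h_x`. -/
noncomputable def cavity {V : Type*} [Fintype V] (J : V → V → ℝ) (h : V → ℝ)
    (σ : Conf V) (x : V) : ℝ :=
  (∑ y, J x y * (σ y : ℝ)) + h x

/-- The extended Hamiltonian `H̃(σ,τ)`. -/
noncomputable def Htilde {V : Type*} [Fintype V] (J : V → V → ℝ) (h q : V → ℝ)
    (σ τ : Conf V) : ℝ :=
  -(1/2) * ∑ x, ∑ y, J x y * (σ x : ℝ) * (τ y : ℝ)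
    - (1/2) * ∑ x, h x * ((σ x : ℝ) + (τ x : ℝ))
    - (1/2) * ∑ x, q x * (σ x : ℝ) * (τ x : ℝ)

/-- The Ising Hamiltonian `H(σ)`. -/
noncomputable def Hamil {V : Type*} [Fintype V] (J : V → V → ℝ) (h : V → ℝ)
    (σ : Conf V) : ℝ :=
  -(1/2) * ∑ x, ∑ y, J x y * (σ x : ℝ) * (σ y : ℝ) - ∑ x, h x * (σ x : ℝ)

/-- The SCA weight `w(σ) = Σ_τ e^{-β H̃(σ,τ)}`. -/
noncomputable def wSCA {V : Type*} [Fintype V] [DecidableEq V] (J : V → V → ℝ)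
    (h q : V → ℝ) (β : ℝ) (σ : Conf V) : ℝ :=
  ∑ τ : Conf V, Real.exp (-β * Htilde J h q σ τ)

/-- The SCA transition probability `P^SCA_{β,q}(σ,τ)`. -/
noncomputable def PSCA {V : Type*} [Fintype V] [DecidableEq V] (J : V → V → ℝ)
    (h q : V → ℝ) (β : ℝ) (σ τ : Conf V) : ℝ :=
  Real.exp (-β * Htilde J h q σ τ) / wSCA J h q β σ

/-- The SCA equilibrium distribution `π^SCA_{β,q}`. -/
noncomputable def piSCA {V : Type*} [Fintype V] [DecidableEq V] (J : V → V → ℝ)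
    (h q : V → ℝ) (β : ℝ) (σ : Conf V) : ℝ :=
  wSCA J h q β σ / ∑ τ : Conf V, wSCA J h q β τ

/-- Total-variation distance between two measures on `Ω`. -/
noncomputable def tvDist {V : Type*} [Fintype V] [DecidableEq V]
    (μ ν : Conf V → ℝ) : ℝ :=
  (1/2) * ∑ σ : Conf V, |μ σ - ν σ|

/-- Dobrushin's ergodic coefficient `δ(P) = max_{σ,τ} ‖P(σ,·) − P(τ,·)‖_TV`. -/
noncomputable def dobrushin {V : Type*} [Fintype V] [DecidableEq V]
    (P : Conf V → Conf V → ℝ) : ℝ :=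
  Finset.univ.sup' Finset.univ_nonempty
    (fun p : Conf V × Conf V => tvDist (P p.1) (P p.2))

/-!
Since spins are `±1`, replacing the target configuration changes `H̃(σ, ·)` by at most
`Γ = ∑ x, (|q x| + |h x| + ∑ y, |J x y|)`. Hence every entry of the transition matrix is at least
`e^{-|β| Γ} / |Ω|`, so any two rows share mass at least `e^{-|β| Γ}` and
`1 - δ ≥ e^{-|β| Γ}` (Doeblin's minorization). Along the logarithmic schedule the right-hand side
is at least `1 / t`, and the harmonic series diverges.
-/

section RealEstimates

lemma abs_div_mul_le {a : ℝ} (ha : 0 ≤ a) (b : ℝ) : |a / b| * b ≤ a :=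
  calc |a / b| * b ≤ |a / b| * |b| := by gcongr; exact le_abs_self b
    _ = a * (|b| / |b|) := by rw [abs_div, abs_of_nonneg ha]; ring
    _ ≤ a := mul_le_of_le_one_right ha (div_self_le_one _)

lemma inv_natCast_le_exp_neg {t : ℕ} (ht : 1 ≤ t) {a : ℝ} (ha : a ≤ log t) :
    (t : ℝ)⁻¹ ≤ exp (-a) := by
  have ht_pos : (0 : ℝ) < t := by exact_mod_cast ht
  rw [exp_neg]
  gcongr
  rwa [← le_log_iff_exp_le ht_pos]

lemma tendsto_sum_Icc_inv_natCast_atTop :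
    Filter.Tendsto (fun N : ℕ => ∑ t ∈ Icc 1 N, (t : ℝ)⁻¹) Filter.atTop Filter.atTop := by
  refine tendsto_sum_range_one_div_nat_succ_atTop.congr fun N => ?_
  simp [← Ico_add_one_right_eq_Icc, sum_Ico_eq_sum_range, add_comm]

lemma exp_neg_div_card_le_exp_div_sum_exp {ι : Type*} [Fintype ι] {f : ι → ℝ} {C : ℝ} {i : ι}
    (hf : ∀ j, f j ≤ C + f i) :
    exp (-C) / Fintype.card ι ≤ exp (f i) / ∑ j, exp (f j) := by
  have hsum_pos : 0 < ∑ j, exp (f j) := sum_pos (fun j _ => exp_pos (f j)) ⟨i, mem_univ i⟩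
  have hsum_le : ∑ j, exp (f j) ≤ Fintype.card ι * (exp C * exp (f i)) := by
    simpa [exp_add] using sum_le_card_nsmul univ (fun j => exp (f j)) (exp (C + f i))
      fun j _ => exp_le_exp.2 (hf j)
  have hcard_pos : (0 : ℝ) < Fintype.card ι := by exact_mod_cast Fintype.card_pos_iff.2 ⟨i⟩
  rw [div_le_div_iff₀ hcard_pos hsum_pos]
  calc exp (-C) * ∑ j, exp (f j)
      ≤ exp (-C) * (Fintype.card ι * (exp C * exp (f i))) := by gcongr
    _ = exp (f i) * Fintype.card ι := by rw [exp_neg]; field_simp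

end RealEstimates

section Minorization

variable {V : Type*} [Fintype V] [DecidableEq V]

lemma tvDist_le_one_sub_sum {μ ν m : Conf V → ℝ} (hμ : ∑ σ, μ σ = 1) (hν : ∑ σ, ν σ = 1)
    (hmμ : ∀ σ, m σ ≤ μ σ) (hmν : ∀ σ, m σ ≤ ν σ) : tvDist μ ν ≤ 1 - ∑ σ, m σ := by
  have habs (σ : Conf V) : |μ σ - ν σ| ≤ μ σ + ν σ - 2 * m σ := by
    rw [abs_le]
    constructor <;> linarith [hmμ σ, hmν σ]
  calc tvDist μ ν ≤ (1 / 2) * ∑ σ, (μ σ + ν σ - 2 * m σ) := by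
        unfold tvDist
        gcongr with σ
        exact habs σ
    _ = 1 - ∑ σ, m σ := by
        rw [sum_sub_distrib, sum_add_distrib, hμ, hν, ← mul_sum]
        ring

lemma sum_le_one_sub_dobrushin {P : Conf V → Conf V → ℝ} {m : Conf V → ℝ}
    (hP : ∀ σ, ∑ τ, P σ τ = 1) (hm : ∀ σ τ, m τ ≤ P σ τ) : ∑ τ, m τ ≤ 1 - dobrushin P := by
  rw [le_sub_comm]
  exact sup'_le _ _ fun p _ => tvDist_le_one_sub_sum (hP p.1) (hP p.2) (hm p.1) (hm p.2)

end Minorization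

section Spin

lemma abs_spin (s : ({-1, 1} : Finset ℝ)) : |(s : ℝ)| = 1 := by
  have hs : (s : ℝ) = -1 ∨ (s : ℝ) = 1 := by simpa only [mem_insert, mem_singleton] using s.2
  rcases hs with hs | hs <;> simp [hs]

lemma abs_spin_sub_spin_le (s r : ({-1, 1} : Finset ℝ)) : |(s : ℝ) - r| ≤ 2 :=
  calc |(s : ℝ) - r| ≤ |(s : ℝ)| + |(r : ℝ)| := abs_sub _ _
    _ = 2 := by rw [abs_spin, abs_spin]; norm_num

end Spin

section Hamiltonian

variable {V : Type*} [Fintype V] (J : V → V → ℝ) (h q : V → ℝ)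

/-- The total interaction strength `Γ`, which bounds the oscillation of `H̃(σ, ·)`. The pinning
parameters enter through `|q x|`, so that it is meaningful for pinnings of either sign. -/
noncomputable def totalCoupling : ℝ :=
  ∑ x, (|q x| + |h x| + ∑ y, |J x y|)

lemma abs_cavity_le (σ : Conf V) (x : V) : |cavity J h σ x| ≤ ∑ y, |J x y| + |h x| :=
  calc |cavity J h σ x| ≤ |∑ y, J x y * (σ y : ℝ)| + |h x| := abs_add_le _ _
    _ ≤ ∑ y, |J x y * (σ y : ℝ)| + |h x| := by gcongr; exact abs_sum_le_sum_abs _ _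
    _ = ∑ y, |J x y| + |h x| := by simp only [abs_mul, abs_spin, mul_one]

-- The couplings are transposed because `σ` carries the first index of `J` in `H̃(σ, τ)`.
lemma Htilde_sub_Htilde (σ τ η : Conf V) :
    Htilde J h q σ τ - Htilde J h q σ η =
      (1 / 2) * ∑ x, (cavity (Function.swap J) h σ x + q x * σ x) * ((η x : ℝ) - τ x) := by
  have hcomm (ρ : Conf V) :
      ∑ x, ∑ y, J x y * (σ x : ℝ) * (ρ y : ℝ) = ∑ x, (∑ y, J y x * (σ y : ℝ)) * (ρ x : ℝ) := by
    rw [sum_comm]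
    simp only [sum_mul]
  simp only [Htilde, hcomm, cavity, Function.swap, mul_sub, add_mul, mul_add, sum_add_distrib,
    sum_sub_distrib]
  ring

lemma abs_Htilde_sub_Htilde_le (σ τ η : Conf V) :
    |Htilde J h q σ τ - Htilde J h q σ η| ≤ totalCoupling J h q := by
  have hfield (x : V) :
      |cavity (Function.swap J) h σ x + q x * σ x| ≤ |q x| + |h x| + ∑ y, |J y x| := by
    have hpin : |q x * (σ x : ℝ)| = |q x| := by rw [abs_mul, abs_spin, mul_one]
    have hcavity : |cavity (Function.swap J) h σ x| ≤ ∑ y, |J y x| + |h x| := abs_cavity_le _ h σ x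
    linarith [abs_add_le (cavity (Function.swap J) h σ x) (q x * σ x)]
  calc |Htilde J h q σ τ - Htilde J h q σ η|
      = (1 / 2) * |∑ x, (cavity (Function.swap J) h σ x + q x * σ x) * ((η x : ℝ) - τ x)| := by
        rw [Htilde_sub_Htilde, abs_mul, abs_of_pos one_half_pos]
    _ ≤ (1 / 2) * ∑ x, (|q x| + |h x| + ∑ y, |J y x|) * 2 := by
        gcongr
        refine (abs_sum_le_sum_abs _ _).trans (sum_le_sum fun x _ => ?_)
        rw [abs_mul]
        gcongr
        exacts [hfield x, abs_spin_sub_spin_le _ _]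
    _ = ∑ x, (|q x| + |h x|) + ∑ x, ∑ y, |J y x| := by
        rw [← sum_mul, sum_add_distrib]
        ring
    _ = totalCoupling J h q := by
        rw [totalCoupling, sum_comm, ← sum_add_distrib]

end Hamiltonian

section SCA

variable {V : Type*} [Fintype V] [DecidableEq V] (J : V → V → ℝ) (h q : V → ℝ) (β : ℝ)

lemma wSCA_pos (σ : Conf V) : 0 < wSCA J h q β σ :=
  sum_pos (fun _ _ => exp_pos _) univ_nonempty

lemma sum_PSCA (σ : Conf V) : ∑ τ, PSCA J h q β σ τ = 1 := by
  simp only [PSCA, ← sum_div]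
  exact div_self (wSCA_pos J h q β σ).ne'

lemma exp_neg_div_card_le_PSCA (σ τ : Conf V) :
    exp (-(|β| * totalCoupling J h q)) / Fintype.card (Conf V) ≤ PSCA J h q β σ τ := by
  refine exp_neg_div_card_le_exp_div_sum_exp (f := fun η => -β * Htilde J h q σ η) fun η => ?_
  rw [← sub_le_iff_le_add]
  calc -β * Htilde J h q σ η - -β * Htilde J h q σ τ
      = β * (Htilde J h q σ τ - Htilde J h q σ η) := by ring
    _ ≤ |β| * |Htilde J h q σ τ - Htilde J h q σ η| := (le_abs_self _).trans (abs_mul _ _).le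
    _ ≤ |β| * totalCoupling J h q := by gcongr; exact abs_Htilde_sub_Htilde_le J h q σ τ η

lemma exp_neg_le_one_sub_dobrushin_PSCA :
    exp (-(|β| * totalCoupling J h q)) ≤ 1 - dobrushin (PSCA J h q β) := by
  have hmass : ∑ _τ : Conf V, exp (-(|β| * totalCoupling J h q)) / Fintype.card (Conf V) =
      exp (-(|β| * totalCoupling J h q)) := by
    rw [sum_const, card_univ, nsmul_eq_mul]
    exact mul_div_cancel₀ _ (Nat.cast_ne_zero.2 Fintype.card_ne_zero)
  rw [← hmass]
  exact sum_le_one_sub_dobrushin (sum_PSCA J h q β) (exp_neg_div_card_le_PSCA J h q β)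

theorem sum_one_sub_dobrushin_diverges_general (βseq : ℕ → ℝ)
    (hβ : ∀ t : ℕ, 1 ≤ t → |βseq t| * totalCoupling J h q ≤ log t) :
    Filter.Tendsto
      (fun N : ℕ => ∑ t ∈ Icc 1 N, (1 - dobrushin (PSCA J h q (βseq t))))
      Filter.atTop Filter.atTop := by
  refine Filter.tendsto_atTop_mono (fun N => sum_le_sum fun t ht => ?_)
    tendsto_sum_Icc_inv_natCast_atTop
  have ht_one : 1 ≤ t := (mem_Icc.1 ht).1
  calc (t : ℝ)⁻¹ ≤ exp (-(|βseq t| * totalCoupling J h q)) :=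
        inv_natCast_le_exp_neg ht_one (hβ t ht_one)
    _ ≤ 1 - dobrushin (PSCA J h q (βseq t)) := exp_neg_le_one_sub_dobrushin_PSCA J h q (βseq t)

end SCA

/-- divergence of ergodic coefficients under logarithmic
cooling: with `Γ = Σ_x (q_x + |h_x| + Σ_y |J_{x,y}|)` and `β_t = (log t)/Γ`,
the series `Σ_{t≥1} (1 − δ(P^SCA_{β_t,q}))` diverges. -/
theorem sum_one_sub_dobrushin_diverges {V : Type*} [Fintype V] [DecidableEq V]
    (J : V → V → ℝ) (hJsym : ∀ x y, J x y = J y x) (hJdiag : ∀ x, J x x = 0)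
    (h q : V → ℝ) (hq : ∀ x, 0 ≤ q x) (Γ : ℝ)
    (hΓ : Γ = ∑ x, (q x + |h x| + ∑ y, |J x y|))
    (βseq : ℕ → ℝ) (hβ : ∀ t : ℕ, 1 ≤ t → βseq t = Real.log t / Γ) :
    Filter.Tendsto
      (fun N : ℕ => ∑ t ∈ Finset.Icc 1 N, (1 - dobrushin (PSCA J h q (βseq t))))
      Filter.atTop Filter.atTop :=
  sum_one_sub_dobrushin_diverges_general J h q βseq fun t ht => by
    simpa only [hβ t ht, hΓ, totalCoupling, abs_of_nonneg (hq _)]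
      using abs_div_mul_le (log_natCast_nonneg t) _
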